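/- There exists a constant B > 0, depending only on ζ, such that the following holds. Suppose ω₀ ≤ 1 and τ_step ≥ 1. For an admissible Ψ as in the context, write I(τ̄) = ∫_X ∫₀^{2π} Ψ(τ̄,φ,x)² dφ dμ(x) for the slice integral at time τ̄. Then for every τ' ∈ ℝ, ∫_{τ'−1}^{τ'} ∫_X ∫₀^{2π} Ψ_♭(t,φ,x)² dφ dμ(x) dt ≤ B ω₀^{-1} · sup_{τ'−τ_step ≤ τ̄ ≤ τ'+τ_step} I(τ̄) + B ω₀^{-7} · sup_{τ̄ : |τ̄−τ'| ≥ τ_step} (τ_step + |τ̄ − τ'|)^{-6} I(τ̄). -/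

import Mathlib

open MeasureTheory Real ENNReal

/-- The low-pass kernel `K_λ(t) = (2π)⁻¹ λ ∫ ζ(ω) e^{iλωt} dω`. -/
noncomputable def lowPassKernel (ζ : ℝ → ℝ) (lam t : ℝ) : ℂ :=
  ((2 * Real.pi)⁻¹ * lam : ℝ) * ∫ ω : ℝ, (ζ ω : ℂ) * Complex.exp (Complex.I * (lam * ω * t))

/-- The low-pass filtering `K_λ ∗ f` of `f` at scale `λ`. -/
noncomputable def lowPassFilter (ζ : ℝ → ℝ) (lam : ℝ) (f : ℝ → ℂ) (t : ℝ) : ℂ :=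
  ∫ s : ℝ, lowPassKernel ζ lam (t - s) * f s

/-- The `k`-th azimuthal Fourier mode `Ψ_k(t,x) = (2π)⁻¹ ∫₀^{2π} Ψ(t,φ,x) e^{ikφ} dφ`. -/
noncomputable def azMode {X : Type} (Ψ : ℝ → ℝ → X → ℝ) (k : ℤ) (t : ℝ) (x : X) : ℂ :=
  ((2 * Real.pi)⁻¹ : ℝ) *
    ∫ φ in (0 : ℝ)..(2 * Real.pi), (Ψ t φ x : ℂ) * Complex.exp (Complex.I * ((k : ℝ) * φ))

/-- The low-frequency part
`Ψ_♭(t,φ,x) = Σ_{k ≠ 0} e^{-ikφ} (K_{ω₀|k|} ∗ Ψ_k(·,x))(t)`. -/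
noncomputable def lowPart {X : Type} (ζ : ℝ → ℝ) (ω₀ : ℝ) (Ψ : ℝ → ℝ → X → ℝ)
    (t φ : ℝ) (x : X) : ℂ :=
  ∑' k : {k : ℤ // k ≠ 0},
    Complex.exp (-(Complex.I * ((k.1 : ℝ) * φ))) *
      lowPassFilter ζ (ω₀ * |(k.1 : ℝ)|) (fun s => azMode Ψ k.1 s x) t

/-- The high-frequency part `Ψ_♯ = Ψ − Ψ_♭`. -/
noncomputable def highPart {X : Type} (ζ : ℝ → ℝ) (ω₀ : ℝ) (Ψ : ℝ → ℝ → X → ℝ)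
    (t φ : ℝ) (x : X) : ℂ :=
  (Ψ t φ x : ℂ) - lowPart ζ ω₀ Ψ t φ x

/-!
Parseval's identity in `φ` reduces the estimate to the modes `K_λ ∗ Ψ_k`, `λ = ω₀|k| ≥ ω₀`. As the
Fourier transform of a Schwartz function at scale `λ`, `K_λ` is bounded by `C λ (1 + λ|t|)⁻ᴹ` for
any `M`, whose mass does not depend on `λ`, so Cauchy–Schwarz gives
`|K_λ ∗ f|² ≤ 2C² ∫ λ (1 + λ|t - s|)⁻ᴹ |f(s)|² ds`. By Tonelli, integrating `t` over the window
`[τ' - 1, τ']` puts on `|Ψ_k(s)|²` a weight that, since `λ ≥ ω₀`, is at most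
`min (ω₀⁻¹ (1 + |s - τ'|)⁻²) (ω₀^(1 - M) (1 + |s - τ'|)⁻ᴹ)` up to a constant, uniformly in `k ≠ 0`.
The modes can therefore be summed again, and the weighted integral of the slice energies is split
at `|s - τ'| = τ_step`, one bound on the weight serving each side.
-/

theorem enorm_sq_eq_ofReal {E : Type*} [SeminormedAddGroup E] (v : E) :
    ‖v‖ₑ ^ 2 = ENNReal.ofReal (‖v‖ ^ 2) := by
  rw [ofReal_pow (norm_nonneg v), ofReal_norm]

theorem orthonormal_hasSum_enorm_sq {𝕜 E ι : Type*} [RCLike 𝕜] [SeminormedAddCommGroup E]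
    [InnerProductSpace 𝕜 E] {v : ι → E} (hv : Orthonormal 𝕜 v) {c : ι → 𝕜} {f : E}
    (hf : HasSum (fun i => c i • v i) f) : HasSum (fun i => ‖c i‖ₑ ^ 2) (‖f‖ₑ ^ 2) := by
  have pythagoras (s : Finset ι) : ‖∑ i ∈ s, c i • v i‖ₑ ^ 2 = ∑ i ∈ s, ‖c i‖ₑ ^ 2 := by
    simp_rw [enorm_sq_eq_ofReal]
    rw [← ofReal_sum_of_nonneg fun _ _ => by positivity]
    simpa using congrArg ENNReal.ofReal (hv.orthogonalFamily.norm_sum c s)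
  simpa only [HasSum, Function.comp_def, pythagoras] using
    (ENNReal.continuous_pow 2).continuousAt.tendsto.comp hf.enorm

theorem sq_lintegral_le {α : Type*} [MeasurableSpace α] {ν : Measure α} {h : α → ℝ≥0∞}
    (hh : AEMeasurable h ν) : (∫⁻ a, h a ∂ν) ^ 2 ≤ ν Set.univ * ∫⁻ a, h a ^ 2 ∂ν := by
  have holder := ENNReal.lintegral_mul_le_Lp_mul_Lq ν Real.HolderConjugate.two_two
    (aemeasurable_const (b := 1)) hh
  calc (∫⁻ a, h a ∂ν) ^ 2
      ≤ (ν Set.univ ^ (1 / 2 : ℝ) * (∫⁻ a, h a ^ 2 ∂ν) ^ (1 / 2 : ℝ)) ^ 2 := by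
        gcongr
        simpa using holder
    _ = ν Set.univ * ∫⁻ a, h a ^ 2 ∂ν := by
        rw [mul_pow, ← ENNReal.rpow_mul_natCast, ← ENNReal.rpow_mul_natCast]
        norm_num

theorem sq_lintegral_mul_le {α : Type*} [MeasurableSpace α] {ν : Measure α} {g h : α → ℝ≥0∞}
    (hg : Measurable g) (hh : Measurable h) :
    (∫⁻ a, g a * h a ∂ν) ^ 2 ≤ (∫⁻ a, g a ∂ν) * ∫⁻ a, g a * h a ^ 2 ∂ν := by
  have := sq_lintegral_le (ν := ν.withDensity g) hh.aemeasurable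
  simpa [lintegral_withDensity_eq_lintegral_mul _ hg, hh, hh.pow_const] using this

theorem integral_inv_one_add_abs_sq : ∫ x : ℝ, ((1 + |x|) ^ 2)⁻¹ = 2 := by
  have hderiv (x : ℝ) (hx : x ∈ Set.Ici 0) :
      HasDerivAt (fun y : ℝ => -(1 + y)⁻¹) ((1 + x) ^ 2)⁻¹ x := by
    have hx : 1 + x ≠ 0 := by have := Set.mem_Ici.1 hx; positivity
    convert! (((hasDerivAt_id x).const_add 1).inv hx).neg using 1
    simp only [id_eq]
    ring
  have hlim : Filter.Tendsto (fun x : ℝ => -(1 + x)⁻¹) Filter.atTop (nhds 0) := by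
    simpa using (tendsto_inv_atTop_zero.comp
      (Filter.tendsto_atTop_add_const_left Filter.atTop (1 : ℝ) Filter.tendsto_id)).neg
  have hpos (x : ℝ) (_ : x ∈ Set.Ioi 0) : 0 ≤ ((1 + x) ^ 2)⁻¹ := by positivity
  rw [integral_comp_abs (f := fun x => ((1 + x) ^ 2)⁻¹),
    integral_Ioi_of_hasDerivAt_of_nonneg' hderiv hpos hlim]
  norm_num

/-- The majorant `λ (1 + λ|t|)⁻ᴺ` of the low-pass kernel at scale `λ`. The factor `λ` makes its mass
independent of `λ`. -/
noncomputable def decayKernel (N : ℕ) (lam t : ℝ) : ℝ :=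
  lam * ((1 + lam * |t|) ^ N)⁻¹

@[fun_prop]
theorem measurable_decayKernel (N : ℕ) (lam : ℝ) : Measurable (decayKernel N lam) := by
  unfold decayKernel
  fun_prop

theorem decayKernel_nonneg {N : ℕ} {lam : ℝ} (hlam : 0 ≤ lam) (t : ℝ) :
    0 ≤ decayKernel N lam t := by
  unfold decayKernel
  positivity

theorem decayKernel_anti {M N : ℕ} (hMN : M ≤ N) {lam : ℝ} (hlam : 0 ≤ lam) (t : ℝ) :
    decayKernel N lam t ≤ decayKernel M lam t := by
  have : 1 ≤ 1 + lam * |t| := by linarith [mul_nonneg hlam (abs_nonneg t)]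
  unfold decayKernel
  gcongr

theorem integral_decayKernel_two {lam : ℝ} (hlam : 0 < lam) : ∫ t, decayKernel 2 lam t = 2 := by
  have scale (t : ℝ) : decayKernel 2 lam t = lam * ((1 + |lam * t|) ^ 2)⁻¹ := by
    rw [decayKernel, abs_mul, abs_of_pos hlam]
  simp_rw [scale, integral_const_mul,
    Measure.integral_comp_mul_left (fun x => ((1 + |x|) ^ 2)⁻¹), integral_inv_one_add_abs_sq]
  rw [abs_of_pos (inv_pos.2 hlam), smul_eq_mul, mul_inv_cancel_left₀ hlam.ne']

theorem lintegral_decayKernel_le {N : ℕ} (hN : 2 ≤ N) {lam : ℝ} (hlam : 0 < lam) :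
    ∫⁻ t, ENNReal.ofReal (decayKernel N lam t) ≤ 2 := by
  have hint : Integrable (decayKernel 2 lam) :=
    .of_integral_ne_zero (by rw [integral_decayKernel_two hlam]; norm_num)
  calc ∫⁻ t, ENNReal.ofReal (decayKernel N lam t)
      ≤ ∫⁻ t, ENNReal.ofReal (decayKernel 2 lam t) :=
        lintegral_mono fun t => ofReal_le_ofReal (decayKernel_anti hN hlam.le t)
    _ = 2 := by
        rw [← ofReal_integral_eq_lintegral_ofReal hint
          (.of_forall (decayKernel_nonneg hlam.le)), integral_decayKernel_two hlam]
        norm_num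

/-- The weight that `∫_{τ'-1}^{τ'} (k ∗ h)(t) dt` puts on `h(s)`, where `k` is
`decayKernel N lam`. -/
noncomputable def windowWeight (N : ℕ) (lam τ' s : ℝ) : ℝ≥0∞ :=
  ∫⁻ t in Set.Icc (τ' - 1) τ', ENNReal.ofReal (decayKernel N lam (t - s))

section WindowWeight

variable {n N : ℕ} {ω lam τ' s t : ℝ}

theorem decayKernel_le_of_far (hn : n + 1 ≤ N) (hω : 0 < ω) (hlam : ω ≤ lam) {r : ℝ} (hr : 0 < r)
    (ht : r ≤ |t|) : decayKernel N lam t ≤ (ω ^ n)⁻¹ * (r ^ (n + 1))⁻¹ := by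
  have hlam₀ : 0 < lam := hω.trans_le hlam
  have ht₀ : 0 < |t| := hr.trans_le ht
  calc decayKernel N lam t ≤ decayKernel (n + 1) lam t := decayKernel_anti hn hlam₀.le t
    _ ≤ lam * ((lam * |t|) ^ (n + 1))⁻¹ := by
        unfold decayKernel
        gcongr
        linarith
    _ = (lam ^ n)⁻¹ * (|t| ^ (n + 1))⁻¹ := by
        rw [mul_pow, pow_succ lam]
        field_simp
    _ ≤ (ω ^ n)⁻¹ * (r ^ (n + 1))⁻¹ := by gcongr

theorem windowWeight_le_two (hN : 2 ≤ N) (hlam : 0 < lam) : windowWeight N lam τ' s ≤ 2 :=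
  calc windowWeight N lam τ' s ≤ ∫⁻ t, ENNReal.ofReal (decayKernel N lam (t - s)) :=
        setLIntegral_le_lintegral _ _
    _ = ∫⁻ t, ENNReal.ofReal (decayKernel N lam t) :=
        lintegral_sub_right_eq_self (fun t => ENNReal.ofReal (decayKernel N lam t)) s
    _ ≤ 2 := lintegral_decayKernel_le hN hlam

theorem windowWeight_le_of_far (hn : n + 1 ≤ N) (hω : 0 < ω) (hlam : ω ≤ lam)
    (hs : 2 ≤ |s - τ'|) :
    windowWeight N lam τ' s ≤
      ENNReal.ofReal ((ω ^ n)⁻¹ * (((1 + |s - τ'|) / 3) ^ (n + 1))⁻¹) := by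
  have hfar (t : ℝ) (ht : t ∈ Set.Icc (τ' - 1) τ') : (1 + |s - τ'|) / 3 ≤ |t - s| := by
    have htriangle : |s - τ'| ≤ |t - s| + |t - τ'| := abs_sub_comm t s ▸ abs_sub_le s t τ'
    have hwindow : |t - τ'| ≤ 1 := abs_le.2 ⟨by linarith [ht.1], by linarith [ht.2]⟩
    linarith
  calc windowWeight N lam τ' s
      ≤ ∫⁻ _ in Set.Icc (τ' - 1) τ',
          ENNReal.ofReal ((ω ^ n)⁻¹ * (((1 + |s - τ'|) / 3) ^ (n + 1))⁻¹) :=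
        setLIntegral_mono measurable_const fun t ht =>
          ofReal_le_ofReal (decayKernel_le_of_far hn hω hlam (by positivity) (hfar t ht))
    _ = _ := by simp

theorem windowWeight_le (hN : 2 ≤ N) (hn : n + 1 ≤ N) (hω : 0 < ω) (hω₁ : ω ≤ 1)
    (hlam : ω ≤ lam) :
    windowWeight N lam τ' s ≤
      ENNReal.ofReal (2 * 3 ^ (n + 1) / ω ^ n * decayKernel (n + 1) 1 (s - τ')) := by
  have hq : 0 < (1 + |s - τ'|) / 3 := by positivity
  have hrescale : 2 * 3 ^ (n + 1) / ω ^ n * decayKernel (n + 1) 1 (s - τ') =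
      2 * ((ω ^ n)⁻¹ * (((1 + |s - τ'|) / 3) ^ (n + 1))⁻¹) := by
    rw [decayKernel, div_pow]
    field_simp
  rw [hrescale]
  rcases le_total 2 |s - τ'| with hfar | hnear
  · exact (windowWeight_le_of_far hn hω hlam hfar).trans
      (ofReal_le_ofReal (le_mul_of_one_le_left (by positivity) one_le_two))
  · have hω_inv : 1 ≤ (ω ^ n)⁻¹ := (one_le_inv₀ (by positivity)).2 (pow_le_one₀ hω.le hω₁)
    have hq_inv : 1 ≤ (((1 + |s - τ'|) / 3) ^ (n + 1))⁻¹ :=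
      (one_le_inv₀ (by positivity)).2 (pow_le_one₀ hq.le (by linarith))
    calc windowWeight N lam τ' s ≤ ENNReal.ofReal 2 := by
          simpa using windowWeight_le_two hN (hω.trans_le hlam)
      _ ≤ _ := ofReal_le_ofReal
          (le_mul_of_one_le_right zero_le_two (one_le_mul_of_one_le_of_one_le hω_inv hq_inv))

end WindowWeight

open scoped SchwartzMap FourierTransform in
theorem lowPassKernel_eq_fourier (ζ : 𝓢(ℝ, ℝ)) (lam t : ℝ) :
    lowPassKernel ζ lam t =
      ((2 * π)⁻¹ * lam : ℝ) * 𝓕 (ζ.postcompCLM Complex.ofRealCLM) (-(lam * t) / (2 * π)) := by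
  rw [lowPassKernel, SchwartzMap.fourier_coe, Real.fourier_real_eq_integral_exp_smul]
  congr 1
  refine integral_congr_ae (.of_forall fun ω => ?_)
  simp only [SchwartzMap.postcompCLM_apply, Complex.ofRealCLM_apply, smul_eq_mul]
  rw [mul_comm]
  congr 2
  push_cast
  field_simp

open scoped SchwartzMap FourierTransform in
theorem exists_norm_lowPassKernel_le (ζ : 𝓢(ℝ, ℝ)) (N : ℕ) :
    ∃ C : ℝ, 0 < C ∧ ∀ lam t : ℝ, 0 < lam → ‖lowPassKernel ζ lam t‖ ≤ C * decayKernel N lam t := by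
  obtain ⟨M, hM⟩ : ∃ M : ℝ, ∀ u : ℝ,
      (1 + |u|) ^ N * ‖𝓕 (ζ.postcompCLM Complex.ofRealCLM) u‖ ≤ M :=
    ⟨_, fun u => by
      simpa using SchwartzMap.one_add_le_sup_seminorm_apply (𝕜 := ℝ) (m := (N, 0)) le_rfl le_rfl
        (𝓕 (ζ.postcompCLM Complex.ofRealCLM)) u⟩
  have hM₀ : 0 ≤ M := le_trans (by positivity) (hM 0)
  have two_pi_ge_one : 1 ≤ 2 * π := by linarith [pi_gt_three]
  refine ⟨(2 * π) ^ N * M + 1, by positivity, fun lam t hlam => ?_⟩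
  set u : ℝ := -(lam * t) / (2 * π) with hu
  have habs : lam * |t| = 2 * π * |u| := by
    rw [hu, abs_div, abs_neg, abs_mul, abs_of_pos hlam, abs_of_pos two_pi_pos]
    field_simp
  have hdecay : ‖𝓕 (ζ.postcompCLM Complex.ofRealCLM) u‖ ≤
      ((2 * π) ^ N * M + 1) * ((1 + lam * |t|) ^ N)⁻¹ := by
    rw [← div_eq_mul_inv, le_div_iff₀' (by positivity)]
    calc (1 + lam * |t|) ^ N * ‖𝓕 (ζ.postcompCLM Complex.ofRealCLM) u‖
        ≤ (2 * π * (1 + |u|)) ^ N * ‖𝓕 (ζ.postcompCLM Complex.ofRealCLM) u‖ := by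
          gcongr
          linarith
      _ = (2 * π) ^ N * ((1 + |u|) ^ N * ‖𝓕 (ζ.postcompCLM Complex.ofRealCLM) u‖) := by
          rw [mul_pow, mul_assoc]
      _ ≤ (2 * π) ^ N * M := by gcongr; exact hM u
      _ ≤ (2 * π) ^ N * M + 1 := by linarith
  calc ‖lowPassKernel ζ lam t‖
      = (2 * π)⁻¹ * lam * ‖𝓕 (ζ.postcompCLM Complex.ofRealCLM) u‖ := by
        rw [lowPassKernel_eq_fourier, norm_mul, Complex.norm_real,
          norm_of_nonneg (by positivity)]
    _ ≤ 1 * lam * (((2 * π) ^ N * M + 1) * ((1 + lam * |t|) ^ N)⁻¹) := by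
        gcongr
        exact inv_le_one_of_one_le₀ two_pi_ge_one
    _ = ((2 * π) ^ N * M + 1) * decayKernel N lam t := by
        rw [decayKernel]
        ring

theorem measurable_lowPassKernel {ζ : ℝ → ℝ} (hζ : Measurable ζ) (lam : ℝ) :
    Measurable (lowPassKernel ζ lam) := by
  have : StronglyMeasurable fun p : ℝ × ℝ =>
      (ζ p.2 : ℂ) * Complex.exp (Complex.I * (lam * p.2 * p.1)) :=
    Measurable.stronglyMeasurable (by fun_prop)
  exact this.integral_prod_right'.measurable.const_mul _

theorem measurable_azMode {X : Type} [MeasurableSpace X] {Ψ : ℝ → ℝ → X → ℝ}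
    (hΨ : Measurable fun p : ℝ × ℝ × X => Ψ p.1 p.2.1 p.2.2) (k : ℤ) :
    Measurable fun p : ℝ × X => azMode Ψ k p.1 p.2 := by
  have hintegrand : StronglyMeasurable fun q : (ℝ × X) × ℝ =>
      (Ψ q.1.1 q.2 q.1.2 : ℂ) * Complex.exp (Complex.I * ((k : ℝ) * q.2)) := by
    have := hΨ.comp (by fun_prop : Measurable fun q : (ℝ × X) × ℝ => (q.1.1, q.2, q.1.2))
    exact Measurable.stronglyMeasurable (by fun_prop)
  simp_rw [azMode, intervalIntegral.integral_of_le two_pi_pos.le]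
  exact hintegrand.integral_prod_right'.measurable.const_mul _

section Filter

variable {X : Type*} [MeasurableSpace X] {ζ : ℝ → ℝ} {C lam : ℝ} {N : ℕ}

theorem measurable_lowPassFilter (hζ : Measurable ζ) {f : ℝ → X → ℂ}
    (hf : Measurable fun p : ℝ × X => f p.1 p.2) (lam : ℝ) :
    Measurable fun p : ℝ × X => lowPassFilter ζ lam (fun s => f s p.2) p.1 := by
  have hintegrand : StronglyMeasurable fun q : (ℝ × X) × ℝ =>
      lowPassKernel ζ lam (q.1.1 - q.2) * f q.2 q.1.2 := by
    have := measurable_lowPassKernel hζ lam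
    have := hf.comp (by fun_prop : Measurable fun q : (ℝ × X) × ℝ => (q.2, q.1.2))
    exact Measurable.stronglyMeasurable (by fun_prop)
  exact hintegrand.integral_prod_right'.measurable

theorem enorm_lowPassFilter_sq_le (hN : 2 ≤ N) (hlam : 0 < lam)
    (hC : 0 ≤ C) (hK : ∀ t, ‖lowPassKernel ζ lam t‖ ≤ C * decayKernel N lam t)
    {f : ℝ → ℂ} (hf : Measurable f) (t : ℝ) :
    ‖lowPassFilter ζ lam f t‖ₑ ^ 2 ≤ ENNReal.ofReal (2 * C ^ 2) *
      ∫⁻ s, ENNReal.ofReal (decayKernel N lam (t - s)) * ‖f s‖ₑ ^ 2 := by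
  set g : ℝ → ℝ≥0∞ := fun s => ENNReal.ofReal (decayKernel N lam (t - s))
  have hg_meas : Measurable g := by fun_prop
  have hg_mass : ∫⁻ s, g s ≤ 2 := by
    rw [lintegral_sub_left_eq_self (fun r => ENNReal.ofReal (decayKernel N lam r)) t]
    exact lintegral_decayKernel_le hN hlam
  have hpointwise (s : ℝ) : ‖lowPassKernel ζ lam (t - s) * f s‖ₑ ≤
      ENNReal.ofReal C * (g s * ‖f s‖ₑ) := by
    rw [enorm_mul, ← mul_assoc, ← ofReal_mul hC, ← ofReal_norm]
    gcongr
    exact hK (t - s)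
  calc ‖lowPassFilter ζ lam f t‖ₑ ^ 2
      ≤ (∫⁻ s, ‖lowPassKernel ζ lam (t - s) * f s‖ₑ) ^ 2 := by
        gcongr
        exact enorm_integral_le_lintegral_enorm _
    _ ≤ (ENNReal.ofReal C * ∫⁻ s, g s * ‖f s‖ₑ) ^ 2 := by
        rw [← lintegral_const_mul' _ _ ofReal_ne_top]
        gcongr with s
        exact hpointwise s
    _ = ENNReal.ofReal (C ^ 2) * (∫⁻ s, g s * ‖f s‖ₑ) ^ 2 := by
        rw [mul_pow, ofReal_pow hC]
    _ ≤ ENNReal.ofReal (C ^ 2) * (2 * ∫⁻ s, g s * ‖f s‖ₑ ^ 2) := by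
        gcongr
        exact (sq_lintegral_mul_le hg_meas hf.enorm).trans (by gcongr)
    _ = ENNReal.ofReal (2 * C ^ 2) * ∫⁻ s, g s * ‖f s‖ₑ ^ 2 := by
        rw [ofReal_mul zero_le_two, ofReal_ofNat]
        ring

theorem lintegral_window_lowPassFilter_le {μ : Measure X} [SFinite μ] (hN : 2 ≤ N)
    (hlam : 0 < lam) (hC : 0 ≤ C) (hK : ∀ t, ‖lowPassKernel ζ lam t‖ ≤ C * decayKernel N lam t)
    {f : ℝ → X → ℂ} (hf : Measurable fun p : ℝ × X => f p.1 p.2) (τ' : ℝ) :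
    ∫⁻ t in Set.Icc (τ' - 1) τ', ∫⁻ x, ‖lowPassFilter ζ lam (fun s => f s x) t‖ₑ ^ 2 ∂μ ≤
      ENNReal.ofReal (2 * C ^ 2) *
        ∫⁻ s, (∫⁻ x, ‖f s x‖ₑ ^ 2 ∂μ) * windowWeight N lam τ' s := by
  have : Measurable fun p : X × ℝ => f p.2 p.1 := hf.comp measurable_swap
  have : Measurable fun s => ∫⁻ x, ‖f s x‖ₑ ^ 2 ∂μ :=
    (hf.enorm.pow_const 2).lintegral_prod_right'
  have integrate_x (t : ℝ) : ∫⁻ x, ‖lowPassFilter ζ lam (fun s => f s x) t‖ₑ ^ 2 ∂μ ≤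
      ENNReal.ofReal (2 * C ^ 2) *
        ∫⁻ s, ENNReal.ofReal (decayKernel N lam (t - s)) * ∫⁻ x, ‖f s x‖ₑ ^ 2 ∂μ :=
    calc ∫⁻ x, ‖lowPassFilter ζ lam (fun s => f s x) t‖ₑ ^ 2 ∂μ
        ≤ ∫⁻ x, (ENNReal.ofReal (2 * C ^ 2) *
            ∫⁻ s, ENNReal.ofReal (decayKernel N lam (t - s)) * ‖f s x‖ₑ ^ 2) ∂μ :=
          lintegral_mono fun x => enorm_lowPassFilter_sq_le hN hlam hC hK hf.of_uncurry_right t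
      _ = ENNReal.ofReal (2 * C ^ 2) *
            ∫⁻ s, ∫⁻ x, ENNReal.ofReal (decayKernel N lam (t - s)) * ‖f s x‖ₑ ^ 2 ∂μ := by
          rw [lintegral_const_mul' _ _ ofReal_ne_top,
            lintegral_lintegral_swap (Measurable.aemeasurable (by fun_prop))]
      _ = _ := by simp_rw [lintegral_const_mul' _ _ ofReal_ne_top]
  calc _ ≤ ∫⁻ t in Set.Icc (τ' - 1) τ', ENNReal.ofReal (2 * C ^ 2) *
          ∫⁻ s, ENNReal.ofReal (decayKernel N lam (t - s)) * ∫⁻ x, ‖f s x‖ₑ ^ 2 ∂μ :=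
        lintegral_mono integrate_x
    _ = ENNReal.ofReal (2 * C ^ 2) * ∫⁻ s, ∫⁻ t in Set.Icc (τ' - 1) τ',
          ENNReal.ofReal (decayKernel N lam (t - s)) * ∫⁻ x, ‖f s x‖ₑ ^ 2 ∂μ := by
        rw [lintegral_const_mul' _ _ ofReal_ne_top,
          lintegral_lintegral_swap (Measurable.aemeasurable (by fun_prop))]
    _ = ENNReal.ofReal (2 * C ^ 2) * ∫⁻ s, (∫⁻ x, ‖f s x‖ₑ ^ 2 ∂μ) * windowWeight N lam τ' s := by
        congr 1
        refine lintegral_congr fun s => ?_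
        rw [lintegral_mul_const _ (by fun_prop), mul_comm, windowWeight]

end Filter

section Fourier

variable {T : ℝ} [Fact (0 < T)]

theorem setLIntegral_Icc_coe_addCircle (g : AddCircle T → ℝ≥0∞) :
    ∫⁻ φ in Set.Icc 0 T, g φ = ENNReal.ofReal T * ∫⁻ x, g x ∂AddCircle.haarAddCircle := by
  rw [← restrict_Ioc_eq_restrict_Icc, ← smul_eq_mul, ← lintegral_smul_measure,
    ← AddCircle.volume_eq_smul_haarAddCircle]
  simpa using AddCircle.lintegral_preimage T 0 g

theorem lintegral_enorm_tsum_mul_fourier_sq_le {ι : Type*} {n : ι → ℤ}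
    (hn : Function.Injective n) (c : ι → ℂ) :
    ∫⁻ x : AddCircle T, ‖∑' i, c i * fourier (n i) x‖ₑ ^ 2 ∂AddCircle.haarAddCircle ≤
      ∑' i, ‖c i‖ₑ ^ 2 := by
  by_cases hc : Summable fun i => ‖c i‖
  case neg =>
    have hzero (x : AddCircle T) : ∑' i, c i * fourier (n i) x = 0 :=
      tsum_eq_zero_of_not_summable fun h => hc <| by
        simpa only [norm_mul, fourier_apply, Circle.norm_coe, mul_one] using h.norm
    simp_rw [hzero]
    simp
  obtain ⟨f, hf⟩ : Summable fun i => c i • (fourier (n i) : C(AddCircle T, ℂ)) :=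
    .of_norm (by simpa only [norm_smul, fourier_norm, mul_one] using hc)
  have hval (x : AddCircle T) : ∑' i, c i * fourier (n i) x = f x :=
    (ContinuousMap.hasSum_apply hf x).tsum_eq
  set toL2 := ContinuousMap.toLp (E := ℂ) 2 (AddCircle.haarAddCircle (T := T)) ℂ
  have hL2 : HasSum (fun i => c i • fourierLp (T := T) 2 (n i)) (toL2 f) := by
    simpa only [map_smul] using! hf.mapL toL2
  refine le_of_eq ?_
  calc ∫⁻ x, ‖∑' i, c i * fourier (n i) x‖ₑ ^ 2 ∂AddCircle.haarAddCircle
      = ∫⁻ x, ‖f x‖ₑ ^ 2 ∂AddCircle.haarAddCircle := by simp_rw [hval]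
    _ = ‖toL2 f‖ₑ ^ 2 := by
        rw [Lp.enorm_def, eLpNorm_congr_ae (ContinuousMap.coeFn_toLp AddCircle.haarAddCircle f)]
        simpa using (eLpNorm_nnreal_pow_eq_lintegral (μ := AddCircle.haarAddCircle)
          (f := f) (p := 2) two_ne_zero).symm
    _ = ∑' i, ‖c i‖ₑ ^ 2 :=
        (orthonormal_hasSum_enorm_sq (orthonormal_fourier.comp n hn) hL2).tsum_eq.symm

theorem ofReal_mul_tsum_enorm_fourierCoeffOn_sq {a b : ℝ} (hab : a < b) {f : ℝ → ℂ}
    (hf : MemLp f 2 (volume.restrict (Set.Ioc a b))) :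
    ENNReal.ofReal (b - a) * ∑' k, ‖fourierCoeffOn hab f k‖ₑ ^ 2 =
      ∫⁻ φ in Set.Icc a b, ‖f φ‖ₑ ^ 2 := by
  have parseval := hasSum_sq_fourierCoeffOn hab hf
  have hba : 0 < b - a := sub_pos.2 hab
  simp_rw [enorm_sq_eq_ofReal]
  rw [← ofReal_tsum_of_nonneg (fun _ => by positivity) parseval.summable, parseval.tsum_eq,
    ← ofReal_mul hba.le, smul_eq_mul, mul_inv_cancel_left₀ hba.ne',
    intervalIntegral.integral_of_le hab.le, ← restrict_Ioc_eq_restrict_Icc,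
    ofReal_integral_eq_lintegral_ofReal (hf.integrable_norm_pow two_ne_zero)
      (.of_forall fun _ => by positivity)]

end Fourier

section AzimuthalModes

variable {X : Type} {Ψ : ℝ → ℝ → X → ℝ}

theorem azMode_eq_fourierCoeffOn (Ψ : ℝ → ℝ → X → ℝ) (k : ℤ) (t : ℝ) (x : X) :
    azMode Ψ k t x = fourierCoeffOn two_pi_pos (fun φ => (Ψ t φ x : ℂ)) (-k) := by
  rw [azMode, fourierCoeffOn_eq_integral, Complex.real_smul, one_div, sub_zero]
  congr 1
  refine intervalIntegral.integral_congr fun φ _ => ?_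
  simp only [neg_neg, fourier_coe_apply, smul_eq_mul]
  rw [mul_comm]
  congr 2
  push_cast
  field_simp

theorem tsum_enorm_azMode_sq_le {t : ℝ} {x : X} (hΨ : Continuous fun φ => Ψ t φ x) :
    ENNReal.ofReal (2 * π) * ∑' k : {k : ℤ // k ≠ 0}, ‖azMode Ψ k t x‖ₑ ^ 2 ≤
      ∫⁻ φ in Set.Icc 0 (2 * π), ‖Ψ t φ x‖ₑ ^ 2 := by
  have hL2 : MemLp (fun φ => (Ψ t φ x : ℂ)) 2 (volume.restrict (Set.Ioc 0 (2 * π))) :=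
    (memLp_two_iff_integrable_sq_norm (by fun_prop)).2
      ((Continuous.integrableOn_Icc (by fun_prop)).mono_set Set.Ioc_subset_Icc_self)
  have hinj : Function.Injective fun k : {k : ℤ // k ≠ 0} => -k.1 :=
    neg_injective.comp Subtype.val_injective
  simp_rw [azMode_eq_fourierCoeffOn]
  calc _ ≤ ENNReal.ofReal (2 * π) *
          ∑' k, ‖fourierCoeffOn two_pi_pos (fun φ => (Ψ t φ x : ℂ)) k‖ₑ ^ 2 := by
        gcongr
        exact tsum_comp_le_tsum_of_injective hinj fun k : ℤ =>
          ‖fourierCoeffOn two_pi_pos (fun φ => (Ψ t φ x : ℂ)) k‖ₑ ^ 2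
    _ = ∫⁻ φ in Set.Icc 0 (2 * π), ‖(Ψ t φ x : ℂ)‖ₑ ^ 2 := by
        simpa only [sub_zero] using ofReal_mul_tsum_enorm_fourierCoeffOn_sq two_pi_pos hL2
    _ = ∫⁻ φ in Set.Icc 0 (2 * π), ‖Ψ t φ x‖ₑ ^ 2 := by
        simp only [enorm_sq_eq_ofReal, Complex.norm_real]

theorem lintegral_enorm_lowPart_sq_le (ζ : ℝ → ℝ) (ω₀ : ℝ) (Ψ : ℝ → ℝ → X → ℝ) (t : ℝ) (x : X) :
    ∫⁻ φ in Set.Icc 0 (2 * π), ‖lowPart ζ ω₀ Ψ t φ x‖ₑ ^ 2 ≤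
      ENNReal.ofReal (2 * π) * ∑' k : {k : ℤ // k ≠ 0},
        ‖lowPassFilter ζ (ω₀ * |(k.1 : ℝ)|) (fun s => azMode Ψ k s x) t‖ₑ ^ 2 := by
  have : Fact (0 < 2 * π) := ⟨two_pi_pos⟩
  have hinj : Function.Injective fun k : {k : ℤ // k ≠ 0} => -k.1 :=
    neg_injective.comp Subtype.val_injective
  set c : {k : ℤ // k ≠ 0} → ℂ := fun k =>
    lowPassFilter ζ (ω₀ * |(k.1 : ℝ)|) (fun s => azMode Ψ k s x) t
  have hlow (φ : ℝ) : lowPart ζ ω₀ Ψ t φ x =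
      ∑' k, c k * fourier (-k.1) (φ : AddCircle (2 * π)) := by
    refine tsum_congr fun k => ?_
    rw [mul_comm, fourier_coe_apply]
    congr 2
    push_cast
    field_simp
  simp_rw [hlow]
  rw [setLIntegral_Icc_coe_addCircle fun y => ‖∑' k, c k * fourier (-k.1) y‖ₑ ^ 2]
  gcongr
  exact lintegral_enorm_tsum_mul_fourier_sq_le hinj c

end AzimuthalModes

/-- The squared `L²` norm `∫_X ∫₀^{2π} |u(τ, φ, x)|² dφ dμ(x)` of the time slice of `u` at `τ`. -/
noncomputable def sliceEnergy {X E : Type*} [MeasurableSpace X] [ENorm E] (μ : Measure X)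
    (u : ℝ → ℝ → X → E) (τ : ℝ) : ℝ≥0∞ :=
  ∫⁻ x, (∫⁻ φ in Set.Icc 0 (2 * π), ‖u τ φ x‖ₑ ^ 2) ∂μ

/-- The supremum of `H` over the times within `τstep` of `τ'`. -/
noncomputable def nearSup (H : ℝ → ℝ≥0∞) (τ' τstep : ℝ) : ℝ≥0∞ :=
  ⨆ τbar : ℝ, ⨆ (_ : |τbar - τ'| ≤ τstep), H τbar

/-- The supremum of `(τstep + |τbar - τ'|)⁻ᴺ H τbar` over the times `τbar` at distance at least
`τstep` from `τ'`. -/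
noncomputable def farSup (N : ℕ) (H : ℝ → ℝ≥0∞) (τ' τstep : ℝ) : ℝ≥0∞ :=
  ⨆ τbar : ℝ, ⨆ (_ : τstep ≤ |τbar - τ'|),
    ENNReal.ofReal (((τstep + |τbar - τ'|) ^ N)⁻¹) * H τbar

section NearFar

variable {H : ℝ → ℝ≥0∞} {τ' τstep a : ℝ}

theorem setLIntegral_le_of_le_decayKernel {A : Set ℝ} (hA : MeasurableSet A) {h : ℝ → ℝ≥0∞}
    {S : ℝ≥0∞} (ha : 0 ≤ a)
    (hh : ∀ s ∈ A, h s ≤ S * ENNReal.ofReal (a * decayKernel 2 1 (s - τ'))) :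
    ∫⁻ s in A, h s ≤ ENNReal.ofReal (2 * a) * S :=
  calc ∫⁻ s in A, h s
      ≤ ∫⁻ s in A, S * ENNReal.ofReal (a * decayKernel 2 1 (s - τ')) := setLIntegral_mono' hA hh
    _ ≤ ∫⁻ s, S * ENNReal.ofReal (a * decayKernel 2 1 (s - τ')) := setLIntegral_le_lintegral _ _
    _ = S * (ENNReal.ofReal a * ∫⁻ s, ENNReal.ofReal (decayKernel 2 1 (s - τ'))) := by
        simp_rw [ofReal_mul ha]
        rw [lintegral_const_mul _ (by fun_prop), lintegral_const_mul _ (by fun_prop)]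
    _ ≤ S * (ENNReal.ofReal a * 2) := by
        gcongr
        rw [lintegral_sub_right_eq_self fun s => ENNReal.ofReal (decayKernel 2 1 s)]
        exact lintegral_decayKernel_le le_rfl one_pos
    _ = ENNReal.ofReal (2 * a) * S := by
        rw [ofReal_mul zero_le_two, ofReal_ofNat]
        ring

theorem setLIntegral_near_le {W : ℝ → ℝ≥0∞} (ha : 0 ≤ a)
    (hW : ∀ s, W s ≤ ENNReal.ofReal (a * decayKernel 2 1 (s - τ'))) :
    ∫⁻ s in {s | |s - τ'| ≤ τstep}, H s * W s ≤ ENNReal.ofReal (2 * a) * nearSup H τ' τstep :=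
  setLIntegral_le_of_le_decayKernel (measurableSet_le (by fun_prop) (by fun_prop)) ha fun s hs =>
    mul_le_mul' (le_iSup₂ (f := fun τbar (_ : |τbar - τ'| ≤ τstep) => H τbar) s hs) (hW s)

theorem setLIntegral_far_le {N : ℕ} {W : ℝ → ℝ≥0∞} (hτ : 0 ≤ τstep) (ha : 0 ≤ a)
    (hW : ∀ s, W s ≤ ENNReal.ofReal (a * decayKernel (N + 2) 1 (s - τ'))) :
    ∫⁻ s in {s | τstep < |s - τ'|}, H s * W s ≤
      ENNReal.ofReal (2 * (2 ^ N * a)) * farSup N H τ' τstep := by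
  refine setLIntegral_le_of_le_decayKernel (τ' := τ')
    (measurableSet_lt (by fun_prop) (by fun_prop)) (by positivity) fun s hs => ?_
  have hs : τstep < |s - τ'| := hs
  have hsum : 0 < τstep + |s - τ'| := by linarith
  have hweight : ((1 + |s - τ'|) ^ N)⁻¹ ≤ 2 ^ N * ((τstep + |s - τ'|) ^ N)⁻¹ := by
    rw [← div_eq_mul_inv, ← div_pow, ← inv_pow]
    gcongr
    rw [inv_le_comm₀ (by positivity) (by positivity), inv_div]
    linarith
  have hdecay : a * decayKernel (N + 2) 1 (s - τ') ≤
      ((τstep + |s - τ'|) ^ N)⁻¹ * (2 ^ N * a * decayKernel 2 1 (s - τ')) :=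
    calc a * decayKernel (N + 2) 1 (s - τ')
        = a * (((1 + |s - τ'|) ^ N)⁻¹ * decayKernel 2 1 (s - τ')) := by
          simp only [decayKernel, one_mul, pow_add, mul_inv]
      _ ≤ a * (2 ^ N * ((τstep + |s - τ'|) ^ N)⁻¹ * decayKernel 2 1 (s - τ')) := by
          gcongr
          exact decayKernel_nonneg zero_le_one _
      _ = _ := by ring
  calc H s * W s
      ≤ H s * ENNReal.ofReal (((τstep + |s - τ'|) ^ N)⁻¹ *
          (2 ^ N * a * decayKernel 2 1 (s - τ'))) := by
        gcongr
        exact (hW s).trans (ofReal_le_ofReal hdecay)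
    _ = ENNReal.ofReal (((τstep + |s - τ'|) ^ N)⁻¹) * H s *
          ENNReal.ofReal (2 ^ N * a * decayKernel 2 1 (s - τ')) := by
        rw [ofReal_mul (by positivity)]
        ring
    _ ≤ farSup N H τ' τstep * ENNReal.ofReal (2 ^ N * a * decayKernel 2 1 (s - τ')) := by
        gcongr
        exact le_iSup₂ (f := fun τbar (_ : τstep ≤ |τbar - τ'|) =>
          ENNReal.ofReal (((τstep + |τbar - τ'|) ^ N)⁻¹) * H τbar) s hs.le

theorem lintegral_mul_le_nearSup_add_farSup {N : ℕ} {b : ℝ} {W : ℝ → ℝ≥0∞} (hτ : 0 ≤ τstep)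
    (ha : 0 ≤ a) (hb : 0 ≤ b)
    (hW_near : ∀ s, W s ≤ ENNReal.ofReal (a * decayKernel 2 1 (s - τ')))
    (hW_far : ∀ s, W s ≤ ENNReal.ofReal (b * decayKernel (N + 2) 1 (s - τ'))) :
    ∫⁻ s, H s * W s ≤ ENNReal.ofReal (2 * a) * nearSup H τ' τstep +
      ENNReal.ofReal (2 * (2 ^ N * b)) * farSup N H τ' τstep := by
  have hmeas : MeasurableSet {s : ℝ | |s - τ'| ≤ τstep} :=
    measurableSet_le (by fun_prop) (by fun_prop)
  have hcompl : {s : ℝ | |s - τ'| ≤ τstep}ᶜ = {s | τstep < |s - τ'|} := by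
    simp only [Set.compl_ofPred, not_le]
  rw [← lintegral_add_compl _ hmeas, hcompl]
  exact add_le_add (setLIntegral_near_le ha hW_near) (setLIntegral_far_le hτ hb hW_far)

end NearFar

section LowPart

variable {X : Type} [MeasurableSpace X] {μ : Measure X} {Ψ : ℝ → ℝ → X → ℝ} {ζ : ℝ → ℝ}

theorem tsum_lintegral_enorm_azMode_sq_le
    (hΨ : Measurable fun p : ℝ × ℝ × X => Ψ p.1 p.2.1 p.2.2)
    (hΨ_cont : ∀ t x, Continuous fun φ => Ψ t φ x) (t : ℝ) :
    ENNReal.ofReal (2 * π) * ∑' k : {k : ℤ // k ≠ 0}, ∫⁻ x, ‖azMode Ψ k t x‖ₑ ^ 2 ∂μ ≤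
      sliceEnergy μ Ψ t := by
  have hmode (k : {k : ℤ // k ≠ 0}) : Measurable fun x => ‖azMode Ψ k t x‖ₑ ^ 2 :=
    (measurable_azMode hΨ k).of_uncurry_left.enorm.pow_const 2
  rw [← lintegral_tsum fun k => (hmode k).aemeasurable, ← lintegral_const_mul' _ _ ofReal_ne_top]
  exact lintegral_mono fun x => tsum_enorm_azMode_sq_le (hΨ_cont t x)

theorem sliceEnergy_lowPart_le (hζ : Measurable ζ)
    (hΨ : Measurable fun p : ℝ × ℝ × X => Ψ p.1 p.2.1 p.2.2) (ω₀ t : ℝ) :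
    sliceEnergy μ (lowPart ζ ω₀ Ψ) t ≤ ENNReal.ofReal (2 * π) * ∑' k : {k : ℤ // k ≠ 0},
      ∫⁻ x, ‖lowPassFilter ζ (ω₀ * |(k.1 : ℝ)|) (fun s => azMode Ψ k s x) t‖ₑ ^ 2 ∂μ := by
  have hfilter (k : {k : ℤ // k ≠ 0}) : Measurable fun x =>
      ‖lowPassFilter ζ (ω₀ * |(k.1 : ℝ)|) (fun s => azMode Ψ k s x) t‖ₑ ^ 2 :=
    ((measurable_lowPassFilter hζ (measurable_azMode hΨ k) _).comp
      measurable_prodMk_left).enorm.pow_const 2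
  rw [← lintegral_tsum fun k => (hfilter k).aemeasurable, ← lintegral_const_mul' _ _ ofReal_ne_top]
  exact lintegral_mono fun x => lintegral_enorm_lowPart_sq_le ζ ω₀ Ψ t x

theorem lintegral_window_sliceEnergy_lowPart_le_tsum [SFinite μ] (hζ : Measurable ζ)
    (hΨ : Measurable fun p : ℝ × ℝ × X => Ψ p.1 p.2.1 p.2.2) (ω₀ τ' : ℝ) :
    ∫⁻ t in Set.Icc (τ' - 1) τ', sliceEnergy μ (lowPart ζ ω₀ Ψ) t ≤
      ENNReal.ofReal (2 * π) * ∑' k : {k : ℤ // k ≠ 0}, ∫⁻ t in Set.Icc (τ' - 1) τ',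
        ∫⁻ x, ‖lowPassFilter ζ (ω₀ * |(k.1 : ℝ)|) (fun s => azMode Ψ k s x) t‖ₑ ^ 2 ∂μ := by
  have hfilter (k : {k : ℤ // k ≠ 0}) : Measurable fun t =>
      ∫⁻ x, ‖lowPassFilter ζ (ω₀ * |(k.1 : ℝ)|) (fun s => azMode Ψ k s x) t‖ₑ ^ 2 ∂μ :=
    ((measurable_lowPassFilter hζ (measurable_azMode hΨ k) _).enorm.pow_const
      2).lintegral_prod_right'
  rw [← lintegral_tsum fun k => (hfilter k).aemeasurable, ← lintegral_const_mul' _ _ ofReal_ne_top]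
  exact lintegral_mono fun t => sliceEnergy_lowPart_le hζ hΨ ω₀ t

theorem lintegral_window_sliceEnergy_lowPart_le [SFinite μ] (hζ : Measurable ζ)
    (hΨ : Measurable fun p : ℝ × ℝ × X => Ψ p.1 p.2.1 p.2.2)
    (hΨ_cont : ∀ t x, Continuous fun φ => Ψ t φ x) {N : ℕ} (hN : 2 ≤ N) {C : ℝ} (hC : 0 ≤ C)
    (hK : ∀ lam t, 0 < lam → ‖lowPassKernel ζ lam t‖ ≤ C * decayKernel N lam t)
    {ω₀ : ℝ} (hω₀ : 0 < ω₀) {τ' : ℝ} {W : ℝ → ℝ≥0∞} (hW_meas : Measurable W)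
    (hW : ∀ lam s, ω₀ ≤ lam → windowWeight N lam τ' s ≤ W s) :
    ∫⁻ t in Set.Icc (τ' - 1) τ', sliceEnergy μ (lowPart ζ ω₀ Ψ) t ≤
      ENNReal.ofReal (2 * C ^ 2) * ∫⁻ s, sliceEnergy μ Ψ s * W s := by
  have hweighted (k : {k : ℤ // k ≠ 0}) :
      Measurable fun s => (∫⁻ x, ‖azMode Ψ k s x‖ₑ ^ 2 ∂μ) * W s :=
    ((measurable_azMode hΨ k).enorm.pow_const 2).lintegral_prod_right'.mul hW_meas
  have hmode (k : {k : ℤ // k ≠ 0}) : ∫⁻ t in Set.Icc (τ' - 1) τ',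
      ∫⁻ x, ‖lowPassFilter ζ (ω₀ * |(k.1 : ℝ)|) (fun s => azMode Ψ k s x) t‖ₑ ^ 2 ∂μ ≤
        ENNReal.ofReal (2 * C ^ 2) * ∫⁻ s, (∫⁻ x, ‖azMode Ψ k s x‖ₑ ^ 2 ∂μ) * W s := by
    have hlam : ω₀ ≤ ω₀ * |(k.1 : ℝ)| :=
      le_mul_of_one_le_right hω₀.le (by exact_mod_cast Int.one_le_abs k.2)
    have hlam_pos := hω₀.trans_le hlam
    refine (lintegral_window_lowPassFilter_le hN hlam_pos hC (fun t => hK _ t hlam_pos)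
      (measurable_azMode hΨ k) τ').trans ?_
    gcongr with s
    exact hW _ s hlam
  calc ∫⁻ t in Set.Icc (τ' - 1) τ', sliceEnergy μ (lowPart ζ ω₀ Ψ) t
      ≤ ENNReal.ofReal (2 * π) * ∑' k : {k : ℤ // k ≠ 0}, ∫⁻ t in Set.Icc (τ' - 1) τ',
          ∫⁻ x, ‖lowPassFilter ζ (ω₀ * |(k.1 : ℝ)|) (fun s => azMode Ψ k s x) t‖ₑ ^ 2 ∂μ :=
        lintegral_window_sliceEnergy_lowPart_le_tsum hζ hΨ ω₀ τ'
    _ ≤ ENNReal.ofReal (2 * π) * ∑' k : {k : ℤ // k ≠ 0}, ENNReal.ofReal (2 * C ^ 2) *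
          ∫⁻ s, (∫⁻ x, ‖azMode Ψ k s x‖ₑ ^ 2 ∂μ) * W s := by
        gcongr with k
        exact hmode k
    _ = ENNReal.ofReal (2 * C ^ 2) * ∫⁻ s, (ENNReal.ofReal (2 * π) *
          ∑' k : {k : ℤ // k ≠ 0}, ∫⁻ x, ‖azMode Ψ k s x‖ₑ ^ 2 ∂μ) * W s := by
        simp_rw [mul_assoc, lintegral_const_mul' _ _ ofReal_ne_top, ENNReal.tsum_mul_left,
          ← ENNReal.tsum_mul_right]
        rw [lintegral_tsum fun k => (hweighted k).aemeasurable, mul_left_comm]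
    _ ≤ ENNReal.ofReal (2 * C ^ 2) * ∫⁻ s, sliceEnergy μ Ψ s * W s := by
        gcongr with s
        exact tsum_lintegral_enorm_azMode_sq_le hΨ hΨ_cont s

end LowPart

/-- The admissible fields `Ψ(t, φ, x)`. Smoothness, periodicity in `φ` and compact support in `t`
make the modes decay rapidly, so that the convolutions and the series in `lowPart` converge
absolutely instead of taking the junk value `0`. -/
structure IsAdmissible {X : Type} [MeasurableSpace X] (Ψ : ℝ → ℝ → X → ℝ) : Prop where
  measurable : Measurable fun p : ℝ × ℝ × X => Ψ p.1 p.2.1 p.2.2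
  contDiff : ∀ x, ContDiff ℝ (⊤ : ℕ∞) fun p : ℝ × ℝ => Ψ p.1 p.2 x
  periodic : ∀ t φ x, Ψ t (φ + 2 * π) x = Ψ t φ x
  compactSupport : ∃ T : ℝ, ∀ t φ x, T < |t| → Ψ t φ x = 0

theorem IsAdmissible.continuous_slice {X : Type} [MeasurableSpace X] {Ψ : ℝ → ℝ → X → ℝ}
    (hΨ : IsAdmissible Ψ) (t : ℝ) (x : X) : Continuous fun φ => Ψ t φ x :=
  (hΨ.contDiff x).continuous.comp (Continuous.prodMk_right t)

open scoped SchwartzMap in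
theorem window_L2_bound_lowPart_general (ζ : 𝓢(ℝ, ℝ)) (N : ℕ) :
    ∃ B : ℝ, 0 < B ∧
      ∀ (X : Type) [MeasurableSpace X] (μ : Measure X) [SFinite μ] (ω₀ τstep τ' : ℝ)
        (Ψ : ℝ → ℝ → X → ℝ), 0 < ω₀ → ω₀ ≤ 1 → 0 ≤ τstep → IsAdmissible Ψ →
        ∫⁻ t in Set.Icc (τ' - 1) τ', sliceEnergy μ (lowPart ζ ω₀ Ψ) t ≤
          ENNReal.ofReal (B / ω₀) * nearSup (sliceEnergy μ Ψ) τ' τstep +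
            ENNReal.ofReal (B / ω₀ ^ (N + 1)) * farSup N (sliceEnergy μ Ψ) τ' τstep := by
  obtain ⟨C, hC, hK⟩ := exists_norm_lowPassKernel_le ζ (N + 2)
  refine ⟨72 * 6 ^ N * C ^ 2, by positivity, fun X _ μ _ ω₀ τstep τ' Ψ hω₀ hω₁ hτ hΨ => ?_⟩
  set a : ℝ := 2 * 3 ^ 2 / ω₀ ^ 1 with ha
  set b : ℝ := 2 * 3 ^ (N + 2) / ω₀ ^ (N + 1) with hb
  let W (s : ℝ) : ℝ≥0∞ := min (ENNReal.ofReal (a * decayKernel 2 1 (s - τ')))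
    (ENNReal.ofReal (b * decayKernel (N + 2) 1 (s - τ')))
  have hW (lam s : ℝ) (hlam : ω₀ ≤ lam) : windowWeight (N + 2) lam τ' s ≤ W s :=
    le_min (windowWeight_le (by lia) (by lia) hω₀ hω₁ hlam)
      (windowWeight_le (by lia) le_rfl hω₀ hω₁ hlam)
  have hnear : 2 * C ^ 2 * (2 * a) ≤ 72 * 6 ^ N * C ^ 2 / ω₀ := by
    have : (1 : ℝ) ≤ 6 ^ N := one_le_pow₀ (by norm_num)
    rw [ha, pow_one, le_div_iff₀ hω₀]
    field_simp
    linarith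
  have hfar : 2 * C ^ 2 * (2 * (2 ^ N * b)) = 72 * 6 ^ N * C ^ 2 / ω₀ ^ (N + 1) := by
    rw [hb, show (6 : ℝ) = 2 * 3 by norm_num, mul_pow]
    ring
  calc ∫⁻ t in Set.Icc (τ' - 1) τ', sliceEnergy μ (lowPart ζ ω₀ Ψ) t
      ≤ ENNReal.ofReal (2 * C ^ 2) * ∫⁻ s, sliceEnergy μ Ψ s * W s :=
        lintegral_window_sliceEnergy_lowPart_le ζ.continuous.measurable hΨ.measurable
          hΨ.continuous_slice (by lia) hC.le hK hω₀ (by fun_prop) hW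
    _ ≤ ENNReal.ofReal (2 * C ^ 2) *
          (ENNReal.ofReal (2 * a) * nearSup (sliceEnergy μ Ψ) τ' τstep +
            ENNReal.ofReal (2 * (2 ^ N * b)) * farSup N (sliceEnergy μ Ψ) τ' τstep) := by
        gcongr
        exact lintegral_mul_le_nearSup_add_farSup hτ (by positivity) (by positivity)
          (fun s => min_le_left _ _) (fun s => min_le_right _ _)
    _ = ENNReal.ofReal (2 * C ^ 2 * (2 * a)) * nearSup (sliceEnergy μ Ψ) τ' τstep +
          ENNReal.ofReal (2 * C ^ 2 * (2 * (2 ^ N * b))) *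
            farSup N (sliceEnergy μ Ψ) τ' τstep := by
        rw [mul_add, ← mul_assoc, ← mul_assoc, ← ofReal_mul (by positivity),
          ← ofReal_mul (by positivity)]
    _ ≤ _ := by
        rw [hfar]
        gcongr

/-- There is `B > 0` (depending only on `ζ`) such that if `ω₀ ≤ 1` and `τ_step ≥ 1`, then,
writing `I(τ̄) = ∫_X∫₀^{2π} Ψ(τ̄,φ,x)² dφ dμ`, for every admissible `Ψ` and every `τ'`:
`∫_{τ'−1}^{τ'}∫_X∫₀^{2π} Ψ_♭² ≤ B ω₀⁻¹ sup_{|τ̄−τ'| ≤ τ_step} I(τ̄)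
  + B ω₀⁻⁷ sup_{|τ̄−τ'| ≥ τ_step} (τ_step + |τ̄−τ'|)⁻⁶ I(τ̄)`. -/
theorem window_L2_bound_lowPart
    (ζ : ℝ → ℝ) (hζ_smooth : ContDiff ℝ (⊤ : ℕ∞) ζ) (hζ_even : ∀ x, ζ (-x) = ζ x)
    (hζ_supp : Function.support ζ ⊆ Set.Icc (-2) 2)
    (hζ_one : ∀ x ∈ Set.Icc (-1 : ℝ) 1, ζ x = 1) :
    ∃ B : ℝ, 0 < B ∧
      ∀ (X : Type) (_ : MeasurableSpace X) (μ : Measure X), SigmaFinite μ →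
      ∀ ω₀ : ℝ, 0 < ω₀ → ω₀ ≤ 1 →
      ∀ τstep : ℝ, 1 ≤ τstep →
      ∀ Ψ : ℝ → ℝ → X → ℝ,
        -- admissibility: joint measurability
        Measurable (fun p : ℝ × ℝ × X => Ψ p.1 p.2.1 p.2.2) →
        -- admissibility: smoothness in (t, φ) for each fixed x
        (∀ x, ContDiff ℝ (⊤ : ℕ∞) fun p : ℝ × ℝ => Ψ p.1 p.2 x) →
        -- admissibility: 2π-periodicity in φ
        (∀ t φ x, Ψ t (φ + 2 * Real.pi) x = Ψ t φ x) →
        -- admissibility: compact support in t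
        (∃ T : ℝ, ∀ t φ x, T < |t| → Ψ t φ x = 0) →
        -- admissibility: the integrals appearing in the statement are finite
        (∀ τ₁ τ₂ : ℝ,
          (∫⁻ t in Set.Icc τ₁ τ₂, (∫⁻ x, (∫⁻ φ in Set.Icc 0 (2 * Real.pi),
            (‖lowPart ζ ω₀ Ψ t φ x‖₊ : ℝ≥0∞) ^ 2) ∂μ)) < ⊤) →
        (∀ τbar : ℝ,
          (∫⁻ x, (∫⁻ φ in Set.Icc 0 (2 * Real.pi),
            (‖Ψ τbar φ x‖₊ : ℝ≥0∞) ^ 2) ∂μ) < ⊤) →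
      ∀ τ' : ℝ,
        (∫⁻ t in Set.Icc (τ' - 1) τ', (∫⁻ x, (∫⁻ φ in Set.Icc 0 (2 * Real.pi),
            (‖lowPart ζ ω₀ Ψ t φ x‖₊ : ℝ≥0∞) ^ 2) ∂μ))
          ≤ ENNReal.ofReal (B / ω₀) *
              (⨆ τbar : ℝ, ⨆ (_ : |τbar - τ'| ≤ τstep),
                ∫⁻ x, (∫⁻ φ in Set.Icc 0 (2 * Real.pi),
                  (‖Ψ τbar φ x‖₊ : ℝ≥0∞) ^ 2) ∂μ)
            + ENNReal.ofReal (B / ω₀ ^ 7) *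
                (⨆ τbar : ℝ, ⨆ (_ : τstep ≤ |τbar - τ'|),
                  ENNReal.ofReal (((τstep + |τbar - τ'|) ^ 6)⁻¹) *
                    ∫⁻ x, (∫⁻ φ in Set.Icc 0 (2 * Real.pi),
                      (‖Ψ τbar φ x‖₊ : ℝ≥0∞) ^ 2) ∂μ) := by
  have hζ_compact : HasCompactSupport ζ := .of_support_subset_isCompact isCompact_Icc hζ_supp
  obtain ⟨B, hB, hbound⟩ :=
    window_L2_bound_lowPart_general (hζ_compact.toSchwartzMap hζ_smooth) 6
  exact ⟨B, hB, fun X _ μ _ ω₀ hω₀ hω₁ τstep hτ Ψ hmeas hsmooth hper hsupp _ _ τ' =>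
    hbound X μ ω₀ τstep τ' Ψ hω₀ hω₁ (zero_le_one.trans hτ) ⟨hmeas, hsmooth, hper, hsupp⟩⟩
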